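/- Let r ≥ 4 be an integer, and let f ∈ L^r_{∞,∞} be non-constant. Set α = M_r(f) and b = √(2·M_{r−2}(f)/M_r(f)), and for β ≥ 0 let g_β = α·ψ_r(0,b,β). Then α, b > 0, and for every β ≥ 0 one has M_{r−2}(g_β) = M_{r−2}(f) and M_r(g_β) = M_r(f); moreover, for every integer s with 0 ≤ s < r−2, the function β ↦ M_s(g_β) is continuous, increasing, and tends to ∞ as β → ∞. -/

import Mathlib

open MeasureTheory Filter

noncomputable section

/-- The uniform norm `‖f‖ = sup_{t ∈ ℝ} |f t|` of a function `f : ℝ → ℝ`. -/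
def unif (f : ℝ → ℝ) : ℝ := ⨆ t : ℝ, |f t|

/-- `M k f = ‖f⁽ᵏ⁾‖`, the uniform norm of the `k`-th derivative of `f`. -/
def M (k : ℕ) (f : ℝ → ℝ) : ℝ := unif (iteratedDeriv k f)

/-- The class `L^r_{∞,∞}`: bounded functions `f : ℝ → ℝ` having `r-1` (continuous)
derivatives, with `f⁽ʳ⁻¹⁾` locally absolutely continuous and `f⁽ʳ⁾` essentially bounded;
the last two conditions are equivalent to `f⁽ʳ⁻¹⁾` being Lipschitz. -/
def MemL (r : ℕ) (f : ℝ → ℝ) : Prop :=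
  Continuous f ∧ (∃ C : ℝ, ∀ t : ℝ, |f t| ≤ C) ∧ ContDiff ℝ (r - 1 : ℕ) f ∧
    ∃ K : NNReal, LipschitzWith K (iteratedDeriv (r - 1) f)

/-- The Euler perfect spline `φ_r`: the `r`-th `2π`-periodic antiderivative with zero
mean value of `t ↦ sgn (sin t)`. -/
def eulerPhi : ℕ → ℝ → ℝ
  | 0 => fun t => Real.sign (Real.sin t)
  | (s + 1) => fun t =>
      (∫ x in (0:ℝ)..t, eulerPhi s x) -
        (1 / (2 * Real.pi)) * ∫ x in (0:ℝ)..(2 * Real.pi), ∫ u in (0:ℝ)..x, eulerPhi s u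

/-- `φ_{λ,r}(t) = λ^{-r} φ_r (λ t)`. -/
def eulerPhiL (lam : ℝ) (r : ℕ) (t : ℝ) : ℝ := lam ^ (-(r : ℤ)) * eulerPhi r (lam * t)

/-- The basic step function: `0` on `[0,a]`, `1` on `(a, a+b]`, `0` after `a+b`. -/
def psiBase (a b : ℝ) (t : ℝ) : ℝ := if t ≤ a then 0 else if t ≤ a + b then 1 else 0

/-- `psiBase` continued evenly with respect to the point `a+b+c`. -/
def psiHalf (a b c t : ℝ) : ℝ :=
  if t ≤ a + b + c then psiBase a b t else psiBase a b (2 * (a + b + c) - t)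

/-- The Rodov step function `ψ_0(a,b,c)`: equal to `psiBase` on `[0, a+b+c]`, continued
evenly with respect to `a+b+c`, then oddly with respect to `2(a+b+c)`, then
`4(a+b+c)`-periodically. -/
def psiZero (a b c t : ℝ) : ℝ :=
  if (t - 4 * (a + b + c) * ⌊t / (4 * (a + b + c))⌋) ≤ 2 * (a + b + c) then
    psiHalf a b c (t - 4 * (a + b + c) * ⌊t / (4 * (a + b + c))⌋)
  else
    -psiHalf a b c (4 * (a + b + c) - (t - 4 * (a + b + c) * ⌊t / (4 * (a + b + c))⌋))

/-- `ψ_s(a,b,c)`: the `s`-th periodic antiderivative of `ψ_0(a,b,c)` with zero mean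
value over the period `[0, 4(a+b+c)]`. -/
def psi : ℕ → ℝ → ℝ → ℝ → ℝ → ℝ
  | 0 => psiZero
  | (s + 1) => fun a b c t =>
      (∫ x in (0:ℝ)..t, psi s a b c x) -
        (1 / (4 * (a + b + c))) *
          ∫ x in (0:ℝ)..(4 * (a + b + c)), ∫ u in (0:ℝ)..x, psi s a b c u

/-- The modulus of continuity `ω(D^k, X; δ) = sup {‖f⁽ᵏ⁾‖ : f ∈ X, ‖f‖ ≤ δ}` of the
differentiation operator `D^k` on a class `X`. -/
def omegaMod (k : ℕ) (X : Set (ℝ → ℝ)) (δ : ℝ) : ℝ :=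
  sSup {y : ℝ | ∃ f ∈ X, M 0 f ≤ δ ∧ M k f = y}

end


lemma bdd_of_osc : ∀ (n : ℕ) (F : ℕ → ℝ → ℝ) (K C : ℝ),
    (∀ k < n, ∀ x, HasDerivAt (F k) (F (k+1) x) x) → (∀ x, |F 0 x| ≤ C) →
    (∀ x y, |x - y| ≤ 1 → |F n x - F n y| ≤ K) → ∃ B, ∀ x, |F n x| ≤ B := by
  intro n
  induction n with
  | zero => intro F K C _ h _; exact ⟨C, h⟩
  | succ n ih =>
    intro F K C hd h0 hK
    have key : ∀ x, ∃ ξ, |x - ξ| ≤ 1 ∧ F n (x+1) - F n x = F (n+1) ξ := by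
      intro x
      obtain ⟨ξ, hξ, h⟩ := exists_hasDerivAt_eq_slope (F n) (F (n+1)) (show x < x + 1 by linarith)
        (fun y _ => (hd n (by omega) y).continuousAt.continuousWithinAt)
        (fun y _ => hd n (by omega) y)
      refine ⟨ξ, ?_, ?_⟩
      · rw [abs_le]; constructor <;> linarith [hξ.1, hξ.2]
      · rw [h]; simp
    obtain ⟨B, hB⟩ := ih (fun k x => F k (x+1) - F k x) (K + K + K) (C + C)
      (by
        intro k hk x
        exact ((hd k (by omega) (x+1)).comp_add_const x 1).sub (hd k (by omega) x))
      (by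
        intro x
        have := h0 (x+1)
        have := h0 x
        have := abs_sub (F 0 (x+1)) (F 0 x)
        linarith)
      (by
        intro x y hxy
        obtain ⟨ξ, h1, h2⟩ := key x
        obtain ⟨η, h3, h4⟩ := key y
        simp only [h2, h4]
        have a1 := hK x ξ h1
        have a2 := hK x y hxy
        have a3 := hK y η h3
        rw [abs_le] at *
        constructor <;> linarith)
    refine ⟨B + K, fun x => ?_⟩
    obtain ⟨ξ, h1, h2⟩ := key x
    have a1 := hK x ξ h1
    have a2 := hB x
    simp only [h2] at a2
    rw [abs_le] at *
    constructor <;> linarith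

lemma osc_of_bdd (f f' : ℝ → ℝ) (B : ℝ) (hd : ∀ x, HasDerivAt f (f' x) x) (hB : ∀ x, |f' x| ≤ B) :
    ∀ x y, |x - y| ≤ 1 → |f x - f y| ≤ B := by
  intro x y h
  have h1 := Convex.norm_image_sub_le_of_norm_hasDerivWithin_le (f := f) (f' := f') (C := B)
    (s := Set.univ) (x := y) (y := x) (fun z _ => (hd z).hasDerivWithinAt) (fun z _ => hB z) convex_univ
    (Set.mem_univ _) (Set.mem_univ _)
  simp only [Real.norm_eq_abs] at h1
  have : 0 ≤ B := (abs_nonneg _).trans (hB 0)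
  nlinarith

lemma bdd_all (n : ℕ) (F : ℕ → ℝ → ℝ) (K C : ℝ)
    (hd : ∀ k < n, ∀ x, HasDerivAt (F k) (F (k+1) x) x) (h0 : ∀ x, |F 0 x| ≤ C)
    (hK : ∀ x y, |x - y| ≤ 1 → |F n x - F n y| ≤ K) : 
    ∀ k ≤ n, ∃ B, ∀ x, |F k x| ≤ B := by
  induction n generalizing K with
  | zero => intro k hk; exact ⟨C, by simpa [Nat.le_zero.1 hk] using h0⟩
  | succ n ih =>
    obtain ⟨B, hB⟩ := bdd_of_osc (n+1) F K C hd h0 hK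
    intro k hk
    rcases Nat.lt_or_ge k (n+1) with h | h
    · exact ih B (fun k hk => hd k (by omega)) (osc_of_bdd _ _ B (hd n (by omega)) hB) k (by omega)
    · have : k = n+1 := by omega
      subst this; exact ⟨B, hB⟩

lemma nonconst_all (n : ℕ) (F : ℕ → ℝ → ℝ)
    (hd : ∀ k < n, ∀ x, HasDerivAt (F k) (F (k+1) x) x)
    (hB : ∀ k ≤ n, ∃ B, ∀ x, |F k x| ≤ B) (hn : ∃ x y, F 0 x ≠ F 0 y) :
    ∀ k ≤ n, ∃ x y, F k x ≠ F k y := by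
  intro k
  induction k with
  | zero => intro _; exact hn
  | succ k ih =>
    intro hk
    obtain ⟨x, y, hxy⟩ := ih (by omega)
    by_contra! hc
    obtain ⟨B, hB⟩ := hB k (by omega)
    set c := F (k+1) 0
    have hc' : ∀ x, F (k+1) x = c := fun x => hc x 0
    have hd' : ∀ x, HasDerivAt (fun t => F k t - c * t) 0 x := by
      intro x
      have := (hd k (by omega) x).sub ((hasDerivAt_id x).const_mul c)
      rw [hc'] at this
      exact this.congr_deriv (by ring)
    have hlin : ∀ x y, F k x - c * x = F k y - c * y :=
      is_const_of_deriv_eq_zero (fun x => (hd' x).differentiableAt) (fun x => (hd' x).deriv)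
    have hc0 : c = 0 := by
      by_contra h0
      have h1 := hlin ((2 * B + 1) / c) 0
      have h2 : c * ((2 * B + 1) / c) = 2 * B + 1 := by field_simp
      have h3 := abs_le.1 (hB ((2 * B + 1) / c))
      have h4 := abs_le.1 (hB 0)
      rw [h2] at h1
      simp at h1
      linarith
    have := hlin x y
    simp [hc0] at this
    exact hxy this

lemma unif_pos (f : ℝ → ℝ) (B : ℝ) (hB : ∀ x, |f x| ≤ B) (h : ∃ x, f x ≠ 0) : 0 < unif f := by
  obtain ⟨x, hx⟩ := h
  have : |f x| ≤ unif f := le_ciSup (f := fun t => |f t|) ⟨B, by rintro _ ⟨y, rfl⟩; exact hB y⟩ x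
  exact (abs_pos.2 hx).trans_le this

lemma f_part (r : ℕ) (hr : 4 ≤ r) (f : ℝ → ℝ) (hf : MemL r f)
    (hnc : ∃ x y : ℝ, f x ≠ f y) : 0 < M r f ∧ 0 < M (r - 2) f := by
  obtain ⟨-, ⟨C, hC⟩, hcd, K, hK⟩ := hf
  have hd : ∀ k < r - 1, ∀ x, HasDerivAt (iteratedDeriv k f) (iteratedDeriv (k+1) f x) x := by
    intro k hk x
    rw [iteratedDeriv_succ]
    exact (hcd.differentiable_iteratedDeriv k (by exact_mod_cast hk) x).hasDerivAt
  have hB := bdd_all (r-1) (fun k => iteratedDeriv k f) K C hd (by simpa using hC) (by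
    intro x y h
    have := hK.dist_le_mul x y
    rw [Real.dist_eq, Real.dist_eq] at this
    have h0 : (0:ℝ) ≤ K := K.2
    show |_| ≤ (K:ℝ)
    nlinarith)
  have hN := nonconst_all (r-1) (fun k => iteratedDeriv k f) hd hB (by simpa using hnc)
  constructor
  · have e : iteratedDeriv r f = deriv (iteratedDeriv (r-1) f) := by
      rw [← iteratedDeriv_succ]; congr 1; omega
    apply unif_pos _ K
    · intro x
      rw [e]
      exact norm_deriv_le_of_lipschitz hK
    · by_contra! h
      obtain ⟨x, y, hxy⟩ := hN (r-1) le_rfl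
      have hac := (hK.lipschitzOnWith (s := Set.uIcc x y)).absolutelyContinuousOnInterval
      have := hac.integral_deriv_eq_sub
      rw [← e] at this
      simp only [h, intervalIntegral.integral_zero] at this
      exact hxy (by linarith)
  · obtain ⟨B, hB'⟩ := hB (r-2) (by omega)
    apply unif_pos _ B hB'
    by_contra! h
    obtain ⟨x, y, hxy⟩ := hN (r-2) (by omega)
    simp [h] at hxy

noncomputable def UU (b : ℝ) : ℕ → ℝ → ℝ → ℝ
  | 0 => fun _ t => ∫ x in (0:ℝ)..t, max (b - x) 0
  | (n + 1) => fun L t => ∫ x in (0:ℝ)..t, UU b n L (L - x)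

lemma UU_cont2 (b : ℝ) (n : ℕ) : Continuous (fun p : ℝ × ℝ => UU b n p.1 p.2) := by
  induction n with
  | zero =>
    simp only [UU]
    exact intervalIntegral.continuous_parametric_intervalIntegral_of_continuous
      (f := fun (_ : ℝ × ℝ) x => max (b - x) 0) (by unfold Function.uncurry; fun_prop) continuous_snd
  | succ n ih =>
    simp only [UU]
    refine intervalIntegral.continuous_parametric_intervalIntegral_of_continuous
      (f := fun (p : ℝ × ℝ) x => UU b n p.1 (p.1 - x)) ?_ continuous_snd
    exact ih.comp (f := fun q : (ℝ × ℝ) × ℝ => (q.1.1, q.1.1 - q.2)) (by fun_prop)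

lemma UU_cont (b : ℝ) (n : ℕ) (L : ℝ) : Continuous (UU b n L) :=
  (UU_cont2 b n).comp (f := fun t => (L, t)) (by fun_prop)

lemma UU_cont' (b : ℝ) (n : ℕ) (L : ℝ) : Continuous (fun x => UU b n L (L - x)) :=
  (UU_cont b n L).comp (by fun_prop)

lemma UU_zero (b : ℝ) (n : ℕ) (L : ℝ) : UU b n L 0 = 0 := by
  cases n <;> simp [UU]

lemma UU_pos (b : ℝ) (hb : 0 < b) (n : ℕ) (L : ℝ) : ∀ t, 0 < t → t ≤ L → 0 < UU b n L t := by
  induction n with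
  | zero =>
    intro t h0 _
    simp only [UU]
    apply intervalIntegral.integral_pos h0 (by fun_prop)
    · intro x _; exact le_max_right _ _
    · exact ⟨0, ⟨le_rfl, h0.le⟩, by simp [hb]⟩
  | succ n ih =>
    intro t h0 h1
    simp only [UU]
    apply intervalIntegral.integral_pos h0 (UU_cont' b n L).continuousOn
    · intro x hx
      rcases eq_or_lt_of_le (hx.2.trans h1) with h | h
      · rw [h, sub_self, UU_zero]
      · exact (ih _ (by linarith) (by linarith [hx.1])).le
    · exact ⟨0, ⟨le_rfl, h0.le⟩, ih _ (by linarith) (by linarith)⟩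

lemma UU_nonneg (b : ℝ) (hb : 0 < b) (n : ℕ) (L : ℝ) (t : ℝ) (h0 : 0 ≤ t) (h1 : t ≤ L) :
    0 ≤ UU b n L t := by
  rcases eq_or_lt_of_le h0 with h | h
  · rw [← h, UU_zero]
  · exact (UU_pos b hb n L t h h1).le

lemma UU_mono (b : ℝ) (hb : 0 < b) (n : ℕ) (L : ℝ) (s t : ℝ) (h0 : 0 ≤ s) (h : s ≤ t) (h1 : t ≤ L) :
    UU b n L s ≤ UU b n L t := by
  cases n with
  | zero =>
    simp only [UU]
    apply intervalIntegral.integral_mono_interval le_rfl h0 h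
    · exact Filter.Eventually.of_forall fun x => le_max_right _ _
    · exact Continuous.intervalIntegrable (by fun_prop) _ _
  | succ n =>
    simp only [UU]
    apply intervalIntegral.integral_mono_interval le_rfl h0 h
    · rw [Filter.EventuallyLE, ae_restrict_iff' measurableSet_Ioc]
      exact Filter.Eventually.of_forall fun x hx =>
        UU_nonneg b hb n L _ (by linarith [hx.2]) (by linarith [hx.1])
    · exact (UU_cont' b n L).intervalIntegrable _ _

lemma UU_le (b : ℝ) (hb : 0 < b) (n : ℕ) (L L' : ℝ) (hL : L ≤ L') :
    ∀ t, 0 ≤ t → t ≤ L → UU b n L t ≤ UU b n L' t := by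
  induction n with
  | zero => intro t _ _; exact le_rfl
  | succ n ih =>
    intro t h0 h1
    simp only [UU]
    apply intervalIntegral.integral_mono_on h0 ((UU_cont' b n L).intervalIntegrable _ _)
      ((UU_cont' b n L').intervalIntegrable _ _)
    intro x hx
    exact (ih _ (by linarith [hx.2]) (by linarith [hx.1])).trans
      (UU_mono b hb n L' _ _ (by linarith [hx.2]) (by linarith) (by linarith [hx.1]))

lemma UU_top_cont (b : ℝ) (n : ℕ) : Continuous (fun L => UU b n L L) :=
  (UU_cont2 b n).comp (f := fun L => (L, L)) (by fun_prop)

lemma UU_top_strict (b : ℝ) (hb : 0 < b) (n : ℕ) (L L' : ℝ) (h0 : 0 ≤ L) (h : L < L') :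
    UU b (n+1) L L < UU b (n+1) L' L' := by
  refine (UU_le b hb (n+1) L L' h.le L h0 le_rfl).trans_lt ?_
  simp only [UU]
  have hi := fun x y => (UU_cont' b n L').intervalIntegrable (μ := volume) x y
  rw [← intervalIntegral.integral_add_adjacent_intervals (hi 0 L) (hi L L')]
  have : 0 < ∫ x in L..L', UU b n L' (L' - x) := by
    apply intervalIntegral.integral_pos h (UU_cont' b n L').continuousOn
    · intro x hx
      exact UU_nonneg b hb n L' _ (by linarith [hx.2]) (by linarith [hx.1])
    · exact ⟨L, ⟨le_rfl, h.le⟩, UU_pos b hb n L' _ (by linarith) (by linarith)⟩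
  linarith

lemma UU_top_tendsto (b : ℝ) (hb : 0 < b) (n : ℕ) :
    Tendsto (fun L => UU b (n+1) L L) atTop atTop := by
  have hc := UU_pos b hb n b b hb le_rfl
  have : Tendsto (fun L : ℝ => (L - b) * UU b n b b) atTop atTop :=
    (tendsto_atTop_add_const_right _ (-b) tendsto_id).atTop_mul_const hc
  refine tendsto_atTop_mono' _ ?_ this
  filter_upwards [eventually_ge_atTop b] with L hL
  simp only [UU]
  have hi := fun x y => (UU_cont' b n L).intervalIntegrable (μ := volume) x y
  rw [← intervalIntegral.integral_add_adjacent_intervals (hi 0 (L - b)) (hi (L - b) L)]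
  have h1 : 0 ≤ ∫ x in (L-b)..L, UU b n L (L - x) := by
    apply intervalIntegral.integral_nonneg (by linarith)
    intro x hx
    exact UU_nonneg b hb n L _ (by linarith [hx.2]) (by linarith [hx.1])
  have h2 : ∫ x in (0:ℝ)..(L-b), UU b n b b ≤ ∫ x in (0:ℝ)..(L-b), UU b n L (L - x) := by
    apply intervalIntegral.integral_mono_on (by linarith) (by simp) (hi _ _)
    intro x hx
    exact (UU_le b hb n b L hL b hb.le le_rfl).trans
      (UU_mono b hb n L _ _ hb.le (by linarith [hx.2]) (by linarith [hx.1]))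
  rw [intervalIntegral.integral_const] at h2
  simp only [smul_eq_mul, sub_zero] at h2
  linarith

lemma UU_base (b : ℝ) (hb : 0 < b) (L : ℝ) (hL : b ≤ L) : UU b 0 L L = b ^ 2 / 2 := by
  simp only [UU]
  have hi := fun x y => (show Continuous (fun x : ℝ => max (b - x) 0) by fun_prop).intervalIntegrable (μ := volume) x y
  rw [← intervalIntegral.integral_add_adjacent_intervals (hi 0 b) (hi b L)]
  have h1 : ∫ x in (0:ℝ)..b, max (b - x) 0 = ∫ x in (0:ℝ)..b, (b - x) := by
    apply intervalIntegral.integral_congr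
    intro x hx
    rw [Set.uIcc_of_le hb.le] at hx
    exact max_eq_left (by linarith [hx.2])
  have h2 : ∫ x in b..L, max (b - x) 0 = ∫ x in b..L, (0:ℝ) := by
    apply intervalIntegral.integral_congr
    intro x hx
    rw [Set.uIcc_of_le hL] at hx
    exact max_eq_right (by linarith [hx.1])
  rw [h1, h2, intervalIntegral.integral_sub (by simp) (by simp)]
  simp
  ring

lemma psiHalf_symm (b c t : ℝ) : psiHalf 0 b c (2 * (0 + b + c) - t) = psiHalf 0 b c t := by
  unfold psiHalf
  rcases lt_trichotomy t (0 + b + c) with h | h | h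
  · rw [if_neg (by linarith), if_pos h.le]; congr 1; ring
  · subst h; rw [if_pos (by linarith), if_pos le_rfl]; congr 1; ring
  · rw [if_pos (by linarith), if_neg (by linarith)]

lemma psiHalf_zero (b c : ℝ) (h : 0 ≤ b + c) : psiHalf 0 b c 0 = 0 := by
  unfold psiHalf psiBase
  rw [if_pos (by linarith), if_pos le_rfl]

lemma psiZero_per (b c : ℝ) (hL : 0 < b + c) (t : ℝ) (k : ℤ) :
    psiZero 0 b c (t + 4 * (0 + b + c) * k) = psiZero 0 b c t := by
  have h4 : 4 * (0 + b + c) ≠ 0 := by apply ne_of_gt; linarith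
  have e : t + 4 * (0 + b + c) * k - 4 * (0 + b + c) * ⌊(t + 4 * (0 + b + c) * k) / (4 * (0 + b + c))⌋
      = t - 4 * (0 + b + c) * ⌊t / (4 * (0 + b + c))⌋ := by
    rw [add_div, mul_div_cancel_left₀ _ h4, Int.floor_add_intCast]
    push_cast; ring
  unfold psiZero
  rw [e]

lemma psiZero_lo (b c : ℝ) (hL : 0 < b + c) (t : ℝ) (h0 : 0 ≤ t) (h1 : t ≤ 2 * (0 + b + c)) :
    psiZero 0 b c t = psiHalf 0 b c t := by
  have hf : ⌊t / (4 * (0 + b + c))⌋ = 0 := by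
    rw [Int.floor_eq_zero_iff]
    exact ⟨div_nonneg h0 (by linarith), by rw [div_lt_one (by linarith)]; linarith⟩
  unfold psiZero
  rw [hf]
  simp only [Int.cast_zero, mul_zero, sub_zero]
  rw [if_pos h1]

lemma psiZero_hi (b c : ℝ) (hL : 0 < b + c) (t : ℝ) (h0 : 2 * (0 + b + c) < t)
    (h1 : t < 4 * (0 + b + c)) :
    psiZero 0 b c t = - psiHalf 0 b c (4 * (0 + b + c) - t) := by
  have hf : ⌊t / (4 * (0 + b + c))⌋ = 0 := by
    rw [Int.floor_eq_zero_iff]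
    exact ⟨div_nonneg (by linarith) (by linarith), by rw [div_lt_one (by linarith)]; linarith⟩
  unfold psiZero
  rw [hf]
  simp only [Int.cast_zero, mul_zero, sub_zero]
  rw [if_neg (by linarith)]

lemma psiZero_four (b c : ℝ) (hL : 0 < b + c) (t : ℝ) (ht : t = 4 * (0 + b + c)) :
    psiZero 0 b c t = 0 := by
  have := psiZero_per b c hL 0 1
  rw [psiZero_lo b c hL 0 le_rfl (by linarith), psiHalf_zero b c hL.le] at this
  rw [← this, ht]
  congr 1
  push_cast
  ring

lemma exists_red (P : ℝ) (hP : 0 < P) (t : ℝ) : ∃ (u : ℝ) (k : ℤ), 0 ≤ u ∧ u < P ∧ t = u + P * k := by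
  refine ⟨t - P * ⌊t / P⌋, ⌊t / P⌋, ?_, ?_, by ring⟩
  · have := Int.floor_le (t / P)
    rw [le_div_iff₀ hP] at this
    linarith
  · have := Int.lt_floor_add_one (t / P)
    rw [div_lt_iff₀ hP] at this
    linarith

lemma psiZero_anti (b c : ℝ) (hL : 0 < b + c) (t : ℝ) :
    psiZero 0 b c (t + 2 * (0 + b + c)) = - psiZero 0 b c t := by
  obtain ⟨u, k, h0, h1, rfl⟩ := exists_red (4 * (0 + b + c)) (by linarith) t
  rw [psiZero_per b c hL, add_right_comm, psiZero_per b c hL]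
  have hz := psiHalf_zero b c hL.le
  have hz2 : psiHalf 0 b c (2 * (0 + b + c)) = 0 := by
    have := psiHalf_symm b c 0
    rw [hz, sub_zero] at this; exact this
  rcases lt_trichotomy u (2 * (0 + b + c)) with h | h | h
  · rw [psiZero_lo b c hL u h0 h.le]
    rcases eq_or_lt_of_le h0 with h0' | h0'
    · subst h0'
      rw [zero_add, psiZero_lo b c hL _ (by linarith) (by linarith), hz, hz2, neg_zero]
    · rw [psiZero_hi b c hL _ (by linarith) (by linarith), ← psiHalf_symm b c u]
      congr 2; ring
  · subst h
    rw [psiZero_lo b c hL _ h0 le_rfl, hz2]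
    rw [neg_zero]
    exact psiZero_four b c hL _ (by ring)
  · rw [psiZero_hi b c hL u h h1, neg_neg, ← psiHalf_symm b c]
    have := psiZero_per b c hL (u - 2 * (0 + b + c)) 1
    rw [psiZero_lo b c hL (u - 2 * (0 + b + c)) (by linarith) (by linarith)] at this
    rw [show 2 * (0 + b + c) - (4 * (0 + b + c) - u) = u - 2 * (0 + b + c) by ring, ← this]
    congr 1
    push_cast
    ring

lemma psiZero_odd (b c : ℝ) (hL : 0 < b + c) (t : ℝ) :
    psiZero 0 b c (-t) = - psiZero 0 b c t := by
  obtain ⟨u, k, h0, h1, rfl⟩ := exists_red (4 * (0 + b + c)) (by linarith) t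
  have e : -(u + 4 * (0 + b + c) * k) = (4 * (0 + b + c) - u) + 4 * (0 + b + c) * ((-k - 1 : ℤ) : ℝ) := by
    push_cast; ring
  rw [e, psiZero_per b c hL, psiZero_per b c hL]
  have hz := psiHalf_zero b c hL.le
  have hz2 : psiHalf 0 b c (2 * (0 + b + c)) = 0 := by
    have := psiHalf_symm b c 0
    rw [hz, sub_zero] at this; exact this
  rcases lt_trichotomy u (2 * (0 + b + c)) with h | h | h
  · rw [psiZero_lo b c hL u h0 h.le]
    rcases eq_or_lt_of_le h0 with h0' | h0'
    · subst h0'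
      rw [hz, neg_zero]
      exact psiZero_four b c hL _ (by ring)
    · rw [psiZero_hi b c hL _ (by linarith) (by linarith)]
      congr 2; ring
  · subst h
    rw [show 4 * (0 + b + c) - 2 * (0 + b + c) = 2 * (0 + b + c) by ring,
      psiZero_lo b c hL _ h0 le_rfl, hz2, neg_zero]
  · rw [psiZero_hi b c hL u h h1, neg_neg, psiZero_lo b c hL _ (by linarith) (by linarith)]

lemma psiBase_abs (a b t : ℝ) : |psiBase a b t| ≤ 1 := by
  unfold psiBase; split_ifs <;> simp

lemma psiZero_abs (a b c t : ℝ) : |psiZero a b c t| ≤ 1 := by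
  unfold psiZero psiHalf
  split_ifs <;> (try rw [abs_neg]) <;> exact psiBase_abs _ _ _

lemma psiZero_meas (a b c : ℝ) : Measurable (psiZero a b c) := by
  have hB : Measurable (psiBase a b) := by
    unfold psiBase
    exact Measurable.ite measurableSet_Iic measurable_const
      (Measurable.ite measurableSet_Iic measurable_const measurable_const)
  have hH : Measurable (psiHalf a b c) := by
    unfold psiHalf
    exact Measurable.ite measurableSet_Iic hB (hB.comp (by fun_prop))
  have hm : Measurable (fun t : ℝ => t - 4 * (a + b + c) * (⌊t / (4 * (a + b + c))⌋ : ℝ)) := by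
    fun_prop
  unfold psiZero
  exact Measurable.ite (measurableSet_le hm measurable_const) (hH.comp hm)
    (hH.comp (measurable_const.sub hm)).neg

lemma psiZero_int (a b c x y : ℝ) : IntervalIntegrable (psiZero a b c) volume x y := by
  refine IntervalIntegrable.mono_fun (intervalIntegrable_const (c := (1:ℝ)))
    (psiZero_meas a b c).aestronglyMeasurable ?_
  exact Filter.Eventually.of_forall fun t => by simpa using psiZero_abs a b c t

/-- recursion step for antiperiodic functions -/
lemma anti_step (φ : ℝ → ℝ) (L : ℝ) (hL : 0 < L) (hi : ∀ x y, IntervalIntegrable φ volume x y)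
    (ha : ∀ t, φ (t + 2 * L) = - φ t) :
    (∀ t, (∫ x in (0:ℝ)..(t + 2 * L), φ x) = (∫ x in (0:ℝ)..(2 * L), φ x) - ∫ x in (0:ℝ)..t, φ x) ∧
    (1 / (4 * L)) * (∫ x in (0:ℝ)..(4 * L), ∫ u in (0:ℝ)..x, φ u) = (∫ x in (0:ℝ)..(2 * L), φ x) / 2 := by
  have h1 : ∀ t, (∫ x in (0:ℝ)..(t + 2 * L), φ x) = (∫ x in (0:ℝ)..(2 * L), φ x) - ∫ x in (0:ℝ)..t, φ x := by
    intro t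
    rw [← intervalIntegral.integral_add_adjacent_intervals (hi 0 (2 * L)) (hi (2 * L) (t + 2 * L))]
    have := intervalIntegral.integral_comp_add_right (a := 0) (b := t) φ (2 * L)
    rw [zero_add] at this
    rw [← this]
    simp only [ha, intervalIntegral.integral_neg]
    ring
  refine ⟨h1, ?_⟩
  have hc : Continuous (fun x => ∫ u in (0:ℝ)..x, φ u) :=
    intervalIntegral.continuous_primitive hi 0
  have hci := fun x y => hc.intervalIntegrable (μ := volume) x y
  rw [← intervalIntegral.integral_add_adjacent_intervals (hci 0 (2 * L)) (hci (2 * L) (4 * L))]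
  have := intervalIntegral.integral_comp_add_right (a := 0) (b := 2 * L) (fun x => ∫ u in (0:ℝ)..x, φ u) (2 * L)
  rw [zero_add, show 2 * L + 2 * L = 4 * L by ring] at this
  rw [← this]
  simp only [h1]
  rw [intervalIntegral.integral_sub (by simp) (hci _ _), intervalIntegral.integral_const]
  simp only [smul_eq_mul, sub_zero]
  field_simp
  ring

structure Nice (L : ℝ) (σ : ℝ) (φ : ℝ → ℝ) : Prop where
  hi : ∀ x y, IntervalIntegrable φ volume x y
  ha : ∀ t, φ (t + 2 * L) = - φ t
  hp : ∀ t, φ (-t) = σ * φ t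

lemma int_parity (φ : ℝ → ℝ) (σ : ℝ) (hp : ∀ t, φ (-t) = σ * φ t) (t : ℝ) :
    (∫ x in (0:ℝ)..(-t), φ x) = - (σ * ∫ x in (0:ℝ)..t, φ x) := by
  have := intervalIntegral.integral_comp_neg (a := 0) (b := t) φ
  simp only [hp, intervalIntegral.integral_const_mul, neg_zero] at this
  rw [intervalIntegral.integral_symm, ← this]

lemma psi_step (b c : ℝ) (hL : 0 < b + c) (n : ℕ) (h : Nice (b + c) (-1) (psi n 0 b c)) :
    (∀ t, psi (n+1) 0 b c t = ∫ x in (b + c)..t, psi n 0 b c x) ∧ Nice (b + c) 1 (psi (n+1) 0 b c) := by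
  obtain ⟨hi, ha, hp⟩ := h
  obtain ⟨h1, h2⟩ := anti_step _ _ hL hi ha
  have e : ∀ t, psi (n+1) 0 b c t = (∫ x in (0:ℝ)..t, psi n 0 b c x) - (∫ x in (0:ℝ)..(2 * (b + c)), psi n 0 b c x) / 2 := by
    intro t
    rw [← h2]; simp [psi]
  have hL2 : (∫ x in (0:ℝ)..(2 * (b + c)), psi n 0 b c x) / 2 = ∫ x in (0:ℝ)..(b+c), psi n 0 b c x := by
    have a1 := h1 (-(b+c))
    rw [int_parity _ _ hp, show -(b+c) + 2 * (b+c) = b + c by ring] at a1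
    linarith
  refine ⟨fun t => ?_, ?_, ?_, ?_⟩
  · rw [e, hL2, intervalIntegral.integral_interval_sub_left (hi _ _) (hi _ _)]
  · intro x y
    apply Continuous.intervalIntegrable
    simp only [funext e]
    exact (intervalIntegral.continuous_primitive hi 0).sub continuous_const
  · intro t
    rw [e, e, h1]; ring
  · intro t
    rw [e, e, int_parity _ _ hp]; ring

lemma psi_step' (b c : ℝ) (hL : 0 < b + c) (n : ℕ) (h : Nice (b + c) 1 (psi n 0 b c)) :
    (∀ t, psi (n+1) 0 b c t = ∫ x in (0:ℝ)..t, psi n 0 b c x) ∧ Nice (b + c) (-1) (psi (n+1) 0 b c) := by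
  obtain ⟨hi, ha, hp⟩ := h
  obtain ⟨h1, h2⟩ := anti_step _ _ hL hi ha
  have hL2 : (∫ x in (0:ℝ)..(2 * (b + c)), psi n 0 b c x) = 0 := by
    have a1 := h1 (-(b+c))
    rw [int_parity _ _ hp, show -(b+c) + 2 * (b+c) = b + c by ring] at a1
    linarith
  have e : ∀ t, psi (n+1) 0 b c t = (∫ x in (0:ℝ)..t, psi n 0 b c x) := by
    intro t
    rw [hL2, zero_div] at h2
    have : psi (n+1) 0 b c t = (∫ x in (0:ℝ)..t, psi n 0 b c x) - (1 / (4 * (b + c))) * (∫ x in (0:ℝ)..(4 * (b + c)), ∫ u in (0:ℝ)..x, psi n 0 b c u) := by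
      simp [psi]
    rw [this, h2, sub_zero]
  refine ⟨e, ?_, ?_, ?_⟩
  · intro x y
    apply Continuous.intervalIntegrable
    simp only [funext e]
    exact intervalIntegral.continuous_primitive hi 0
  · intro t
    rw [e, e, h1, hL2]; ring
  · intro t
    rw [e, e, int_parity _ _ hp]; ring

lemma psi_nice0 (b c : ℝ) (hL : 0 < b + c) : Nice (b + c) (-1) (psi 0 0 b c) := by
  refine ⟨psiZero_int 0 b c, fun t => ?_, fun t => ?_⟩
  · have := psiZero_anti b c hL t
    rw [zero_add] at this; exact this
  · rw [neg_one_mul]; exact psiZero_odd b c hL t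

lemma psi_nice (b c : ℝ) (hL : 0 < b + c) (m : ℕ) :
    Nice (b + c) (-1) (psi (2 * m) 0 b c) ∧ Nice (b + c) 1 (psi (2 * m + 1) 0 b c) := by
  induction m with
  | zero => exact ⟨psi_nice0 b c hL, (psi_step b c hL 0 (psi_nice0 b c hL)).2⟩
  | succ m ih =>
    have h := (psi_step' b c hL _ ih.2).2
    exact ⟨h, (psi_step b c hL _ h).2⟩

lemma psi_rec_even (b c : ℝ) (hL : 0 < b + c) (n : ℕ) (hn : Even n) (t : ℝ) :
    psi (n+1) 0 b c t = ∫ x in (b + c)..t, psi n 0 b c x := by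
  obtain ⟨m, rfl⟩ := hn
  rw [← two_mul]
  exact (psi_step b c hL _ (psi_nice b c hL m).1).1 t

lemma psi_rec_odd (b c : ℝ) (hL : 0 < b + c) (n : ℕ) (hn : ¬ Even n) (t : ℝ) :
    psi (n+1) 0 b c t = ∫ x in (0:ℝ)..t, psi n 0 b c x := by
  obtain ⟨m, rfl⟩ := Nat.not_even_iff_odd.1 hn
  exact (psi_step' b c hL _ (psi_nice b c hL m).2).1 t

lemma psi_nice_all (b c : ℝ) (hL : 0 < b + c) (n : ℕ) : ∃ σ, |σ| = 1 ∧ Nice (b + c) σ (psi n 0 b c) := by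
  rcases Nat.even_or_odd' n with ⟨m, rfl | rfl⟩
  · exact ⟨-1, by simp, (psi_nice b c hL m).1⟩
  · exact ⟨1, by simp, (psi_nice b c hL m).2⟩

lemma psi_diff (b c : ℝ) (hL : 0 < b + c) (n : ℕ) (s t : ℝ) :
    psi (n+1) 0 b c t - psi (n+1) 0 b c s = ∫ x in s..t, psi n 0 b c x := by
  obtain ⟨σ, -, h⟩ := psi_nice_all b c hL n
  simp only [psi]
  rw [sub_sub_sub_cancel_right, intervalIntegral.integral_interval_sub_left (h.hi _ _) (h.hi _ _)]

lemma psi_cont (b c : ℝ) (hL : 0 < b + c) (n : ℕ) : Continuous (psi (n+1) 0 b c) := by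
  obtain ⟨σ, -, h⟩ := psi_nice_all b c hL n
  simp only [psi]
  exact (intervalIntegral.continuous_primitive h.hi 0).sub continuous_const

lemma psi_hasDeriv (b c : ℝ) (hL : 0 < b + c) (n : ℕ) (t : ℝ) :
    HasDerivAt (psi (n+2) 0 b c) (psi (n+1) 0 b c t) t := by
  have hc := psi_cont b c hL n
  have := (intervalIntegral.integral_hasDerivAt_right (hc.intervalIntegrable 0 t)
    (hc.stronglyMeasurableAtFilter _ _) hc.continuousAt).add_const (psi (n+2) 0 b c 0)
  refine this.congr_of_eventuallyEq (Filter.Eventually.of_forall fun s => ?_)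
  have := psi_diff b c hL (n+1) 0 s
  show psi (n+2) 0 b c s = _
  linarith

lemma psiZero_one (b c : ℝ) (hb : 0 < b) (hc : 0 ≤ c) (t : ℝ) (h0 : 0 < t) (h1 : t ≤ b) :
    psiZero 0 b c t = 1 := by
  rw [psiZero_lo b c (by linarith) t h0.le (by linarith)]
  unfold psiHalf psiBase
  rw [if_pos (by linarith), if_neg (by linarith), if_pos (by linarith)]

lemma psiZero_zero (b c : ℝ) (hb : 0 < b) (hc : 0 ≤ c) (t : ℝ) (h0 : b < t) (h1 : t ≤ b + c) :
    psiZero 0 b c t = 0 := by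
  rw [psiZero_lo b c (by linarith) t (by linarith) (by linarith)]
  unfold psiHalf psiBase
  rw [if_pos (by linarith), if_neg (by linarith), if_neg (by linarith)]

lemma psi_one (b c : ℝ) (hb : 0 < b) (hc : 0 ≤ c) (t : ℝ) (h0 : 0 ≤ t) (h1 : t ≤ b + c) :
    psi 1 0 b c t = - max (b - t) 0 := by
  rw [psi_rec_even b c (by linarith) 0 (by simp), intervalIntegral.integral_symm]
  congr 1
  have hz : ∀ s, b ≤ s → s ≤ b + c → ∫ x in s..(b+c), psi 0 0 b c x = 0 := by
    intro s hs hs'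
    rw [intervalIntegral.integral_congr_ae (g := fun _ => (0:ℝ))]
    · simp
    · refine Filter.Eventually.of_forall fun x hx => ?_
      rw [Set.uIoc_of_le hs'] at hx
      exact psiZero_zero b c hb hc x (hs.trans_lt hx.1) hx.2
  rcases le_total b t with h | h
  · rw [max_eq_right (by linarith), hz t h h1]
  · rw [max_eq_left (by linarith)]
    have hi := psiZero_int 0 b c
    show ∫ x in t..(b+c), psiZero 0 b c x = _
    rw [← intervalIntegral.integral_add_adjacent_intervals (hi t b) (hi b (b+c))]
    have := hz b le_rfl (by linarith)
    simp only [psi] at this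
    rw [this, intervalIntegral.integral_congr_ae (g := fun _ => (1:ℝ))]
    · simp
    · refine Filter.Eventually.of_forall fun x hx => ?_
      rw [Set.uIoc_of_le h] at hx
      exact psiZero_one b c hb hc x (h0.trans_lt hx.1) hx.2

lemma psi_UU (b c : ℝ) (hb : 0 < b) (hc : 0 ≤ c) (n : ℕ) :
    ∃ σ : ℝ, |σ| = 1 ∧ ∀ t, 0 ≤ t → t ≤ b + c →
      psi (n+2) 0 b c t = σ * UU b n (b + c) (if Even n then t else b + c - t) := by
  have hL : 0 < b + c := by linarith
  induction n with
  | zero =>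
    refine ⟨-1, by simp, fun t h0 h1 => ?_⟩
    rw [psi_rec_odd b c hL 1 (by simp)]
    simp only [UU, Even.zero, if_true]
    rw [neg_one_mul, ← intervalIntegral.integral_neg]
    apply intervalIntegral.integral_congr
    intro x hx
    rw [Set.uIcc_of_le h0] at hx
    exact psi_one b c hb hc x hx.1 (hx.2.trans h1)
  | succ n ih =>
    obtain ⟨σ, hσ, ih⟩ := ih
    by_cases hn : Even n
    · refine ⟨-σ, by simpa using hσ, fun t h0 h1 => ?_⟩
      simp only [hn, if_true] at ih
      rw [psi_rec_even b c hL (n+2) (by grind), if_neg (by grind), intervalIntegral.integral_symm, neg_mul]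
      congr 1
      simp only [UU]
      rw [intervalIntegral.integral_comp_sub_left (fun x => UU b n (b+c) x), sub_sub_cancel, sub_zero,
        ← intervalIntegral.integral_const_mul]
      apply intervalIntegral.integral_congr
      intro x hx
      rw [Set.uIcc_of_le h1] at hx
      exact ih x (h0.trans hx.1) hx.2
    · refine ⟨σ, hσ, fun t h0 h1 => ?_⟩
      simp only [hn, if_false] at ih
      rw [psi_rec_odd b c hL (n+2) (by grind), if_pos (by grind)]
      simp only [UU]
      rw [← intervalIntegral.integral_const_mul]
      apply intervalIntegral.integral_congr
      intro x hx
      rw [Set.uIcc_of_le h0] at hx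
      exact ih x hx.1 (hx.2.trans h1)

lemma Nice.abs_bound {L σ : ℝ} {φ : ℝ → ℝ} (h : Nice L σ φ) (hσ : |σ| = 1) (hL : 0 < L) (B : ℝ)
    (hB : ∀ t, 0 ≤ t → t ≤ L → |φ t| ≤ B) (t : ℝ) : |φ t| ≤ B := by
  have hper : Function.Periodic (fun t => |φ t|) (2 * L) := fun t => by simp only [h.ha, abs_neg]
  obtain ⟨u, k, h0, h1, rfl⟩ := exists_red (2 * L) (by linarith) t
  have e : |φ (u + 2 * L * k)| = |φ u| := by
    have := hper.int_mul k u
    rw [mul_comm] at this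
    exact this
  rw [e]
  rcases le_total u L with hu | hu
  · exact hB u h0 hu
  · have e1 : |φ u| = |φ (2 * L - u)| := by
      have := h.ha (-u)
      rw [h.hp, show -u + 2 * L = 2 * L - u by ring] at this
      rw [this, abs_neg, abs_mul, hσ, one_mul]
    rw [e1]
    exact hB _ (by linarith) (by linarith)

lemma unif_eq (f : ℝ → ℝ) (B : ℝ) (hB : ∀ t, |f t| ≤ B) (h : ∃ t, |f t| = B) : unif f = B := by
  apply le_antisymm
  · exact ciSup_le hB
  · obtain ⟨t, ht⟩ := h
    rw [← ht]
    exact le_ciSup (f := fun t => |f t|) ⟨B, by rintro _ ⟨y, rfl⟩; exact hB y⟩ t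

lemma psi_unif (α b c : ℝ) (hα : 0 < α) (hb : 0 < b) (hc : 0 ≤ c) (n : ℕ) :
    unif (fun t => α * psi (n+2) 0 b c t) = α * UU b n (b + c) (b + c) := by
  have hL : 0 < b + c := by linarith
  obtain ⟨σ, hσ, h⟩ := psi_UU b c hb hc n
  obtain ⟨τ, hτ, hN⟩ := psi_nice_all b c hL (n+2)
  apply unif_eq
  · intro t
    rw [abs_mul, abs_of_pos hα]
    apply mul_le_mul_of_nonneg_left _ hα.le
    refine hN.abs_bound hτ hL _ (fun t h0 h1 => ?_) t
    rw [h t h0 h1, abs_mul, hσ, one_mul]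
    have key : ∀ s, 0 ≤ s → s ≤ b + c → |UU b n (b+c) s| ≤ UU b n (b+c) (b+c) := by
      intro s hs hs'
      rw [abs_of_nonneg (UU_nonneg b hb n _ s hs hs')]
      exact UU_mono b hb n _ _ _ hs hs' le_rfl
    split_ifs
    · exact key t h0 h1
    · exact key _ (by linarith) (by linarith)
  · have hp := UU_pos b hb n (b+c) (b+c) hL le_rfl
    by_cases hn : Even n
    · refine ⟨b + c, ?_⟩
      rw [h _ hL.le le_rfl, if_pos hn, abs_mul, abs_mul, hσ, one_mul, abs_of_pos hα, abs_of_pos hp]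
    · refine ⟨0, ?_⟩
      rw [h _ le_rfl hL.le, if_neg hn, sub_zero, abs_mul, abs_mul, hσ, one_mul, abs_of_pos hα, abs_of_pos hp]

lemma iter_psi (α b c : ℝ) (hL : 0 < b + c) (n : ℕ) : ∀ s : ℕ,
    iteratedDeriv s (fun t => α * psi (n + 1 + s) 0 b c t) = fun t => α * psi (n + 1) 0 b c t := by
  intro s
  induction s generalizing n with
  | zero => simp
  | succ s ih =>
    have := ih (n+1)
    rw [iteratedDeriv_succ, show n + 1 + (s + 1) = n + 1 + 1 + s by ring, this]
    ext t
    exact ((psi_hasDeriv b c hL n t).const_mul α).deriv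

lemma M_low (α b c : ℝ) (hα : 0 < α) (hb : 0 < b) (hc : 0 ≤ c) (n s : ℕ) :
    M s (fun t => α * psi (n + 2 + s) 0 b c t) = α * UU b n (b + c) (b + c) := by
  unfold M
  rw [iter_psi α b c (by linarith) (n+1) s]
  exact psi_unif α b c hα hb hc n

lemma M_top (α b c : ℝ) (hα : 0 < α) (hb : 0 < b) (hc : 0 ≤ c) (s : ℕ) :
    M (s+1) (fun t => α * psi (s + 1) 0 b c t) = α := by
  have hL : 0 < b + c := by linarith
  unfold M
  rw [iteratedDeriv_succ, add_comm s 1, ← zero_add 1, iter_psi α b c hL 0 s]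
  have hlip : ∀ s t, |psi (0+1) 0 b c t - psi (0+1) 0 b c s| ≤ |t - s| := by
    intro s t
    rw [psi_diff b c hL]
    have := intervalIntegral.norm_integral_le_of_norm_le_const (a := s) (b := t) (C := 1)
      (f := psi 0 0 b c) (fun x _ => psiZero_abs 0 b c x)
    simpa using this
  apply unif_eq
  · intro t
    have : LipschitzWith ⟨α, hα.le⟩ (fun t => α * psi (0+1) 0 b c t) := by
      apply LipschitzWith.of_dist_le_mul
      intro x y
      rw [Real.dist_eq, Real.dist_eq, ← mul_sub, abs_mul, abs_of_pos hα]
      exact mul_le_mul_of_nonneg_left (hlip y x) hα.le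
    exact norm_deriv_le_of_lipschitz this
  · refine ⟨b / 2, ?_⟩
    have : HasDerivAt (fun t => α * psi (0+1) 0 b c t) α (b/2) := by
      have h1 : HasDerivAt (fun t => α * (t - b)) α (b/2) := by
        simpa using ((hasDerivAt_id (b/2)).sub_const b).const_mul α
      refine h1.congr_of_eventuallyEq ?_
      filter_upwards [Ioo_mem_nhds (show 0 < b/2 by linarith) (show b/2 < b by linarith)] with t ht
      rw [zero_add, psi_one b c hb hc t ht.1.le (by linarith [ht.2]), max_eq_left (by linarith [ht.2])]
      ring
    rw [this.deriv, abs_of_pos hα]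

/-- The one-parameter spline family for `𝐤 = (0,k,r-2,r)`: for non-constant
`f ∈ L^r_{∞,∞}`, the splines `g_β = α ψ_r(0,b,β)` with `α = M_r(f)` and
`b = √(2 M_{r-2}(f)/M_r(f))` match `M_{r-2}` and `M_r` of `f`, while for each
`s < r-2` the map `β ↦ M_s(g_β)` continuously increases to `∞`. -/
theorem stmt12 (r : ℕ) (hr : 4 ≤ r) (f : ℝ → ℝ) (hf : MemL r f)
    (hnc : ∃ x y : ℝ, f x ≠ f y)
    (α b : ℝ) (hα : α = M r f) (hb : b = Real.sqrt (2 * M (r - 2) f / M r f))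
    (g : ℝ → ℝ → ℝ) (hg : g = fun β t => α * psi r 0 b β t) :
    0 < α ∧ 0 < b ∧
    (∀ β : ℝ, 0 ≤ β → M (r - 2) (g β) = M (r - 2) f ∧ M r (g β) = M r f) ∧
    (∀ s : ℕ, s < r - 2 →
      ContinuousOn (fun β => M s (g β)) (Set.Ici 0) ∧
      StrictMonoOn (fun β => M s (g β)) (Set.Ici 0) ∧
      Filter.Tendsto (fun β => M s (g β)) Filter.atTop Filter.atTop) := by
  obtain ⟨hr0, hr2⟩ := f_part r hr f hf hnc
  have hα0 : 0 < α := hα ▸ hr0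
  have hb0 : 0 < b := by rw [hb]; exact Real.sqrt_pos.2 (by positivity)
  have hb2 : α * (b ^ 2 / 2) = M (r - 2) f := by
    rw [hb, Real.sq_sqrt (by positivity), hα]
    field_simp
  have hlow : ∀ s n, r = n + 2 + s → ∀ β, 0 ≤ β → M s (g β) = α * UU b n (b + β) (b + β) := by
    intro s n h β hβ
    rw [hg]
    subst h
    exact M_low α b β hα0 hb0 hβ n s
  refine ⟨hα0, hb0, fun β hβ => ⟨?_, ?_⟩, fun s hs => ?_⟩
  · rw [hlow (r-2) 0 (by omega) β hβ, UU_base b hb0 _ (by linarith), hb2]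
  · rw [← hα, hg]
    obtain ⟨k, rfl⟩ : ∃ k, r = k + 1 := ⟨r - 1, by omega⟩
    exact M_top α b β hα0 hb0 hβ k
  · obtain ⟨n, hn⟩ : ∃ n, r = (n + 1) + 2 + s := ⟨r - 3 - s, by omega⟩
    have hM := hlow s (n+1) hn
    have hsh : Continuous (fun β : ℝ => b + β) := by fun_prop
    refine ⟨?_, ?_, ?_⟩
    · refine ContinuousOn.congr (f := fun β => α * UU b (n+1) (b + β) (b + β)) ?_ (fun β hβ => hM β hβ)
      exact (continuous_const.mul ((UU_top_cont b (n+1)).comp hsh)).continuousOn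
    · intro x hx y hy hxy
      simp only [Set.mem_Ici] at hx hy
      simp only [hM x hx, hM y hy]
      exact mul_lt_mul_of_pos_left (UU_top_strict b hb0 n _ _ (by linarith) (by linarith)) hα0
    · have h1 : Tendsto (fun β : ℝ => α * UU b (n+1) (b + β) (b + β)) atTop atTop :=
        ((UU_top_tendsto b hb0 n).comp (tendsto_atTop_add_const_left _ b tendsto_id)).const_mul_atTop hα0
      refine h1.congr' ?_
      filter_upwards [eventually_ge_atTop 0] with β hβ
      exact (hM β hβ).symm
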